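/- arXiv:1901.02827 — 3 statements merged into one kernel-verified Lean document; each statement's English description precedes it below -/
import Mathlib

section
/- Let C, X, C̄, X̄ be schemes, all assumed separated. Suppose given a commutative square of morphisms of schemes f : C → X, f̄ : C̄ → X̄, j : X → X̄ and j_C : C → C̄ with f̄ ∘ j_C = j ∘ f, such that f is proper, j and j_C are open immersions, and the image of j_C is dense in C̄. Then the square is necessarily Cartesian, i.e. C together with the maps f and j_C is the fibre product X ×_{X̄} C̄ of j : X → X̄ and f̄ : C̄ → X̄ (equivalently, j_C identifies C with the open subscheme f̄^{-1}(X) of C̄). -/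
open AlgebraicGeometry CategoryTheory CategoryTheory.Limits

/-- **Lemma (compactification squares are Cartesian).**
Given separated schemes `C`, `X`, `C̄`, `X̄`, a commutative square with `f : C ⟶ X` proper,
`j : X ⟶ X̄` and `j_C : C ⟶ C̄` open immersions, and `j_C` with dense image, the square is
Cartesian, i.e. `C` is the fibre product of `j` and `f̄`. -/
theorem compactification_square_isPullback
    (C X Cb Xb : Scheme) [C.IsSeparated] [X.IsSeparated] [Cb.IsSeparated] [Xb.IsSeparated]
    (f : C ⟶ X) (fb : Cb ⟶ Xb) (j : X ⟶ Xb) (jC : C ⟶ Cb)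
    (comm : f ≫ j = jC ≫ fb)
    [IsProper f] [IsOpenImmersion j] [IsOpenImmersion jC]
    (hdense : DenseRange jC.base) :
    IsPullback f jC j fb := by
  have hfb : IsSeparated fb := by
    have : IsSeparated (fb ≫ terminal.from Xb) := by
      rw [terminal.comp_from]; infer_instance
    exact IsSeparated.of_comp fb (terminal.from Xb)
  let l : C ⟶ pullback j fb := pullback.lift f jC comm
  have h1 : l ≫ pullback.fst j fb = f := pullback.lift_fst _ _ _
  have h2 : l ≫ pullback.snd j fb = jC := pullback.lift_snd _ _ _
  have hl1 : IsOpenImmersion l := by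
    have : IsOpenImmersion (l ≫ pullback.snd j fb) := by rw [h2]; infer_instance
    exact IsOpenImmersion.of_comp l (pullback.snd j fb)
  have hl2 : IsProper l := by
    have : IsProper (l ≫ pullback.fst j fb) := by rw [h1]; infer_instance
    exact IsProper.of_comp l (pullback.fst j fb)
  have hcl : IsClosed (Set.range l) := l.isClosedMap.isClosed_range
  have hd : Dense ((pullback.snd j fb) ⁻¹' (Set.range jC)) :=
    Dense.preimage hdense (pullback.snd j fb).isOpenEmbedding.isOpenMap
  have hsub : (pullback.snd j fb) ⁻¹' (Set.range jC) ⊆ Set.range l := by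
    rintro x ⟨c, hc⟩
    refine ⟨c, (pullback.snd j fb).isOpenEmbedding.injective ?_⟩
    rw [← hc, ← h2, Scheme.Hom.comp_apply]
  have hsurj : Surjective l :=
    ⟨Set.range_eq_univ.mp (hcl.closure_eq ▸ (hd.mono hsub).closure_eq)⟩
  have hiso : IsIso l := (isIso_iff_isOpenImmersion_and_surjective l).mpr ⟨hl1, hsurj⟩
  exact IsPullback.of_iso_pullback ⟨comm⟩ (asIso l) h1 h2
end

section
/- Let k be a field of characteristic p > 0, let r ≥ 1 be an integer and set q = p^r. Let A be an étale k-algebra (i.e. A is formally étale over k and of finite presentation). Then the relative Frobenius map F : A^{(q)} → A, namely the unique k-algebra homomorphism sending a simple tensor a ⊗ λ to a^{q}·λ, is bijective (an isomorphism of k-algebras). -/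
open scoped TensorProduct

universe u

/-- The Frobenius twist of the base field: `TwistK K p r` is a copy of `K`, regarded as a
`K`-algebra via the `r`-th iterate of the Frobenius `x ↦ x ^ p ^ r`. For a `K`-algebra `A`,
the Frobenius twist `A^{(p^r)}` is then `A ⊗[K] TwistK K p r`. -/
def TwistK (K : Type u) (p r : ℕ) : Type u := K

instance (K : Type u) [Field K] (p r : ℕ) : Field (TwistK K p r) :=
  inferInstanceAs (Field K)

noncomputable instance (K : Type u) [Field K] (p r : ℕ) [Fact p.Prime] [CharP K p] :
    Algebra K (TwistK K p r) :=
  (show K →+* TwistK K p r from iterateFrobenius K p r).toAlgebra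

/-- The tautological identification of `K` with its copy `TwistK K p r` (as rings). -/
def TwistK.up (K : Type u) (p r : ℕ) (x : K) : TwistK K p r := x

def ATwist (A : Type u) : Type u := A

instance (A : Type u) [CommRing A] : CommRing (ATwist A) := inferInstanceAs (CommRing A)

theorem bijective_aux {k S A A' : Type u} [Field k] [Field S] [Algebra k S] [CommRing A]
    [Algebra k A] [CommRing A'] [Algebra S A']
    [Algebra.FormallyEtale k A] [Algebra.FinitePresentation k A]
    (F : S ⊗[k] A →ₐ[S] A') (hF : ∀ x, F x = 0 → IsNilpotent x)
    [Module.Finite S A']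
    (hd : Module.finrank S A' = Module.finrank k A) : Function.Bijective F := by
  have : Module.Finite k A := Algebra.FormallyUnramified.finite_of_free k A
  have : IsReduced (S ⊗[k] A) := Algebra.FormallyUnramified.isReduced_of_field S (S ⊗[k] A)
  have hinj : Function.Injective F.toLinearMap := by
    rw [← LinearMap.ker_eq_bot, LinearMap.ker_eq_bot']
    intro x hx
    exact (hF x hx).eq_zero
  refine ⟨hinj, ?_⟩
  have h := LinearMap.injective_iff_surjective_of_finrank_eq_finrank (f := F.toLinearMap)
    (by rw [hd, Module.finrank_baseChange])
  exact h.1 hinj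

/-- **Lemma.** Let `k` be a field of characteristic `p > 0`, `q = p ^ r` with `r ≥ 1`, and let
`A` be an étale `k`-algebra (formally étale and of finite presentation). Then the relative
Frobenius `F : A^{(q)} → A`, the unique `k`-algebra homomorphism with `F (a ⊗ λ) = a ^ q · λ`,
is bijective. -/
theorem relativeFrobenius_bijective_of_etale
    (k : Type u) [Field k] (p : ℕ) [Fact p.Prime] [CharP k p] (r : ℕ) (hr : 1 ≤ r)
    (A : Type u) [CommRing A] [Algebra k A]
    [Algebra.FormallyEtale k A] [Algebra.FinitePresentation k A] :
    ∃ F : (A ⊗[k] TwistK k p r) →+* A,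
      (∀ (a : A) (l : k),
          F (a ⊗ₜ[k] TwistK.up k p r l) = a ^ p ^ r * algebraMap k A l) ∧
        Function.Bijective F := by
  cases subsingleton_or_nontrivial A with
  | inl hA =>
    have : Subsingleton (A ⊗[k] TwistK k p r) := by
      refine subsingleton_of_forall_eq 0 fun x => ?_
      induction x using TensorProduct.induction_on with
      | zero => rfl
      | tmul a b => rw [Subsingleton.elim a 0, TensorProduct.zero_tmul]
      | add a b ha hb => rw [ha, hb, add_zero]
    refine ⟨{ toFun := fun _ => 0
              map_one' := Subsingleton.elim _ _
              map_mul' := fun _ _ => Subsingleton.elim _ _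
              map_zero' := rfl
              map_add' := fun _ _ => Subsingleton.elim _ _ }, fun _ _ => Subsingleton.elim _ _,
      fun _ _ _ => Subsingleton.elim _ _, fun y => ⟨0, Subsingleton.elim _ _⟩⟩
  | inr hA =>
    have : CharP A p := charP_of_injective_algebraMap (algebraMap k A).injective p
    let iS : Algebra (TwistK k p r) (ATwist A) :=
      RingHom.toAlgebra (show TwistK k p r →+* ATwist A from algebraMap k A)
    let ik : Algebra k (ATwist A) :=
      ((algebraMap (TwistK k p r) (ATwist A)).comp (algebraMap k (TwistK k p r))).toAlgebra
    have : IsScalarTower k (TwistK k p r) (ATwist A) := IsScalarTower.of_algebraMap_eq fun _ => rfl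
    have : CharP (TwistK k p r ⊗[k] A) p :=
      charP_of_injective_algebraMap (algebraMap k (TwistK k p r ⊗[k] A)).injective p
    let φ : A →ₐ[k] ATwist A :=
      { (show A →+* ATwist A from iterateFrobenius A p r) with
        commutes' := fun c => by
          change (algebraMap k A c) ^ p ^ r = algebraMap k A (c ^ p ^ r)
          rw [map_pow] }
    let F : TwistK k p r ⊗[k] A →ₐ[TwistK k p r] ATwist A :=
      Algebra.TensorProduct.lift (Algebra.ofId _ _) φ (fun _ _ => Commute.all _ _)
    have hFt : ∀ (l : k) (a : A), F (TwistK.up k p r l ⊗ₜ[k] a) = 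
        (show ATwist A from algebraMap k A l * a ^ p ^ r) := fun l a => by
      rw [Algebra.TensorProduct.lift_tmul]
      rfl
    let ψ : ATwist A →+* TwistK k p r ⊗[k] A :=
      (show A →+* TwistK k p r ⊗[k] A from
        (Algebra.TensorProduct.includeRight : A →ₐ[k] TwistK k p r ⊗[k] A).toRingHom)
    have key : ∀ (l : k) (a : A), (TwistK.up k p r l ⊗ₜ[k] a) ^ p ^ r =
        ψ (F (TwistK.up k p r l ⊗ₜ[k] a)) := by
      intro l a
      rw [hFt, Algebra.TensorProduct.tmul_pow]
      change _ = (1 : TwistK k p r) ⊗ₜ[k] (algebraMap k A l * a ^ p ^ r)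
      rw [← Algebra.smul_def, TensorProduct.tmul_smul, TensorProduct.smul_tmul',
        Algebra.smul_def, mul_one]
      rfl
    have hψ : ∀ x, x ^ p ^ r = ψ (F x) := by
      intro x
      induction x using TensorProduct.induction_on with
      | zero => rw [map_zero, map_zero, zero_pow (pow_ne_zero _ (Fact.out : p.Prime).ne_zero)]
      | tmul l a =>
        exact key l a
      | add a b ha hb => rw [add_pow_char_pow, ha, hb, map_add, map_add]
    let e₁ : k ≃+* TwistK k p r := RingEquiv.refl k
    let e₂ : A ≃+* ATwist A := RingEquiv.refl A
    have hfin : Module.Finite k A := Algebra.FormallyUnramified.finite_of_free k A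
    have : Module.Finite (TwistK k p r) (ATwist A) :=
      Module.Finite.of_equiv_equiv (A₁ := k) (B₁ := A) (A₂ := TwistK k p r) (B₂ := ATwist A) e₁ e₂ rfl
    have hd : Module.finrank k A = Module.finrank (TwistK k p r) (ATwist A) :=
      Algebra.finrank_eq_of_equiv_equiv e₁ e₂ rfl
    have hb := bijective_aux F (fun x hx => ⟨p ^ r, by rw [hψ, hx, map_zero]⟩) hd.symm
    refine ⟨(show ATwist A →+* A from RingHom.id A).comp (F.toRingHom.comp
      (Algebra.TensorProduct.comm k A (TwistK k p r)).toRingEquiv.toRingHom), ?_, ?_⟩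
    · intro a l
      rw [mul_comm]
      exact hFt l a
    · exact hb.comp (Algebra.TensorProduct.comm k A (TwistK k p r)).bijective
end

section
/- Let L/K be a finite purely inseparable extension of fields of characteristic p > 0 of degree p^n. Let R := L^{(p^n)} be the Frobenius twist of L over K by the n-th iterate of Frobenius. Then the structure homomorphism K → R/nil(R) is an isomorphism of K-algebras; equivalently, every element of R is congruent, modulo the nilradical, to an element in the image of K. -/
open scoped TensorProduct

universe u

/-- The tautological identification of `K` with its copy `TwistK K p r`, as a ring
homomorphism. -/
def TwistK.upRingHom (K : Type u) [Field K] (p r : ℕ) : K →+* TwistK K p r :=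
  RingHom.id K

/-- The structure homomorphism `K → R/nil(R)` for `R := L^{(p^n)}` the Frobenius twist of `L`
over `K` (with `R` regarded as a `K`-algebra through the right-hand tensor factor):
`λ ↦ (1 ⊗ λ) mod nil(R)`. -/
noncomputable def twistStructureMap (K : Type u) [Field K] (p n : ℕ) [Fact p.Prime] [CharP K p]
    (L : Type u) [Field L] [Algebra K L] :
    K →+* (L ⊗[K] TwistK K p n) ⧸ nilradical (L ⊗[K] TwistK K p n) :=
  (Ideal.Quotient.mk (nilradical (L ⊗[K] TwistK K p n))).comp
    ((Algebra.TensorProduct.includeRight :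
        TwistK K p n →ₐ[K] L ⊗[K] TwistK K p n).toRingHom.comp (TwistK.upRingHom K p n))

/-- **Lemma.** Let `L/K` be a finite purely inseparable extension of fields of characteristic
`p > 0` of degree `p ^ n`, and let `R := L^{(p^n)}` be the Frobenius twist of `L` over `K` by
the `n`-th iterate of Frobenius. Then the structure homomorphism `K → R/nil(R)` is an
isomorphism of `K`-algebras. -/
theorem twist_reduction_trivial_of_purelyInseparable
    (K L : Type u) [Field K] [Field L] [Algebra K L] [FiniteDimensional K L]
    (p : ℕ) [Fact p.Prime] [CharP K p] (n : ℕ)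
    [IsPurelyInseparable K L] (hdeg : Module.finrank K L = p ^ n) :
    Function.Bijective (twistStructureMap K p n L) := by
  have hp : p.Prime := Fact.out
  have : CharP (L ⊗[K] TwistK K p n) p :=
    charP_of_injective_algebraMap (algebraMap K (L ⊗[K] TwistK K p n)).injective p
  have : Nontrivial ((L ⊗[K] TwistK K p n) ⧸ nilradical (L ⊗[K] TwistK K p n)) := by
    apply Ideal.Quotient.nontrivial_iff.mpr
    intro h
    have h1 : (1 : L ⊗[K] TwistK K p n) ∈ nilradical (L ⊗[K] TwistK K p n) := by
      rw [h]; trivial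
    rw [mem_nilradical] at h1
    exact not_isNilpotent_one h1
  refine ⟨(twistStructureMap K p n L).injective, ?_⟩
  have key : ∀ a : L, ∃ c : K, twistStructureMap K p n L c =
      Ideal.Quotient.mk (nilradical (L ⊗[K] TwistK K p n)) (a ⊗ₜ[K] (1 : TwistK K p n)) := by
    intro a
    have : ExpChar K p := ExpChar.prime hp
    have hle : IsPurelyInseparable.elemExponent K a ≤ n := by
      have h1 := minpoly.natDegree_le (A := K) a
      rw [hdeg, IsPurelyInseparable.minpoly_natDegree_eq' K p a] at h1
      exact (Nat.pow_le_pow_iff_right hp.one_lt).mp h1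
    obtain ⟨c, hc⟩ : ∃ c : K, algebraMap K L c = a ^ p ^ n := by
      refine ⟨(IsPurelyInseparable.elemReduct K a) ^
        p ^ (n - IsPurelyInseparable.elemExponent K a), ?_⟩
      rw [map_pow, IsPurelyInseparable.algebraMap_elemReduct_eq' K p a, ← pow_mul, ← pow_add,
        Nat.add_sub_cancel' hle]
    refine ⟨c, ?_⟩
    refine Ideal.Quotient.eq.mpr ?_
    rw [mem_nilradical]
    refine ⟨p ^ n, ?_⟩
    rw [sub_pow_char_pow, sub_eq_zero]
    change ((1 : L) ⊗ₜ[K] (TwistK.upRingHom K p n c)) ^ p ^ n = _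
    rw [Algebra.TensorProduct.tmul_pow, Algebra.TensorProduct.tmul_pow, one_pow, one_pow, ← hc]
    have h2 : (TwistK.upRingHom K p n c) ^ p ^ n = algebraMap K (TwistK K p n) c := rfl
    rw [h2, Algebra.algebraMap_eq_smul_one, Algebra.algebraMap_eq_smul_one,
      TensorProduct.smul_tmul]
  intro y
  obtain ⟨x, rfl⟩ := Ideal.Quotient.mk_surjective y
  induction x using TensorProduct.induction_on with
  | zero => exact ⟨0, by simp⟩
  | add x y hx hy =>
    obtain ⟨c, hc⟩ := hx
    obtain ⟨d, hd⟩ := hy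
    exact ⟨c + d, by rw [map_add, map_add, hc, hd]⟩
  | tmul a b =>
    obtain ⟨c, hc⟩ := key a
    have hb : twistStructureMap K p n L (show K from b) =
      Ideal.Quotient.mk (nilradical (L ⊗[K] TwistK K p n)) ((1 : L) ⊗ₜ[K] b) := rfl
    refine ⟨c * (show K from b), ?_⟩
    rw [map_mul, hc, hb, ← map_mul, Algebra.TensorProduct.tmul_mul_tmul, mul_one, one_mul]
end
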